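/- Let G and \bar{G} be connected graphs of order n ≥ 5. Then 2 ≤ rvx_3(G) + rvx_3(\bar{G}) ≤ n − 1, and both bounds are attained for suitable G. -/

import Mathlib

/-- A vertex-coloring `c` makes `G` vertex-rainbow `k`-tree-connected using at most `m`
colors (on Steiner vertices): every `k`-subset `S` of vertices admits a connected subgraph
(equivalently, a Steiner tree) containing `S` whose vertices outside `S` receive pairwise
distinct colors, all drawn from a palette of `m` colors. -/
def hasRvxColoring {V : Type*} (G : SimpleGraph V) (k m : ℕ) : Prop :=
  ∃ c : V → ℕ, ∀ S : Finset V, S.card = k →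
    ∃ T : G.Subgraph, T.Connected ∧ ↑S ⊆ T.verts ∧
      Set.InjOn c (T.verts \ ↑S) ∧ ∀ v ∈ T.verts \ (↑S : Set V), c v < m

/-- The `k`-vertex-rainbow index `rvx_k(G)`. -/
noncomputable def rvx {V : Type*} (G : SimpleGraph V) (k : ℕ) : ℕ :=
  sInf {m | hasRvxColoring G k m}

/-- The Steiner distance of a vertex set `S`: the minimum number of edges of a connected
subgraph of `G` containing `S`. -/
noncomputable def steinerDist {V : Type*} (G : SimpleGraph V) (S : Set V) : ℕ :=
  sInf {m | ∃ T : G.Subgraph, T.Connected ∧ S ⊆ T.verts ∧ T.edgeSet.ncard = m}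

/-- The Steiner `k`-diameter of `G`. -/
noncomputable def sdiam {V : Type*} [Fintype V] [DecidableEq V]
    (G : SimpleGraph V) (k : ℕ) : ℕ :=
  (Finset.univ.powersetCard k).sup fun S : Finset V => steinerDist G (S : Set V)

/-- `t(n,k,ℓ)`: the minimal number of edges of a connected graph of order `n`
with `rvx_k(G) ≤ ℓ`. -/
noncomputable def minSize (n k l : ℕ) : ℕ :=
  sInf {m | ∃ G : SimpleGraph (Fin n), G.Connected ∧ rvx G k ≤ l ∧ G.edgeSet.ncard = m}

/-!
A connected dominating set `D`, coloured injectively, gives `rvx G k ≤ |D|`; deleting two leaves of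
a spanning tree gives `rvx G k ≤ n - 2`. If `2 ≤ rvx Gᶜ k`, some `k`-set `S` cannot be joined in
`Gᶜ` with a single further vertex. Then one vertex from each component of `Gᶜ[S]` makes up a clique
of `G` of size at most `k`, and it dominates `G`, so `rvx G k ≤ k`. Equality forces this clique to
have `k` vertices, each with a private neighbour, hence `2k ≤ n`; comparing degrees in `G` and `Gᶜ`,
equality cannot hold on both sides if `n = 2k`. So `rvx G k + rvx Gᶜ k ≤ n - 1` whenever `3 ≤ k` and
`2k ≤ n + 1`.

For `k = 3` the value `0` is excluded because some vertex `v` has two neighbours `a, b` in `Gᶜ`, and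
`v` is isolated in `G[{v, a, b}]`. Neither the 5-cycle nor its complement has a dominating clique,
so blow-ups of the 5-cycle attain the lower bound; paths attain the upper bound, since a connected
subgraph of a path that contains both ends is spanning.
-/

section Domination

variable {V : Type*} {G : SimpleGraph V} {k : ℕ}

/-- `D` is a dominating set of `G`: every vertex outside `D` has a neighbour in `D`. Connected
dominating sets are the source of all upper bounds on `rvx`. -/
def IsDominating (G : SimpleGraph V) (D : Set V) : Prop :=
  ∀ v ∉ D, ∃ d ∈ D, G.Adj d v

lemma IsDominating.connected_induce_union {D : Set V} (hD : IsDominating G D)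
    (hconn : (G.induce D).Connected) (S : Set V) : (G.induce (D ∪ S)).Connected := by
  obtain ⟨⟨u, hu⟩⟩ := hconn.nonempty
  have reach (d : V) (hd : d ∈ D) :
      (G.induce (D ∪ S)).Reachable ⟨u, .inl hu⟩ ⟨d, .inl hd⟩ :=
    (hconn.preconnected ⟨u, hu⟩ ⟨d, hd⟩).map
      (SimpleGraph.induceHomOfLE G Set.subset_union_left).toHom
  refine (SimpleGraph.connected_iff_exists_forall_reachable _).2 ⟨⟨u, .inl hu⟩, ?_⟩
  rintro ⟨v, hv⟩
  by_cases hvD : v ∈ D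
  · exact reach v hvD
  · obtain ⟨d, hd, hdv⟩ := hD v hvD
    have hadj : (G.induce (D ∪ S)).Adj ⟨d, .inl hd⟩ ⟨v, hv⟩ := hdv
    exact (reach d hd).trans hadj.reachable

lemma IsDominating.mono {H : SimpleGraph V} {D : Set V} (hD : IsDominating G D) (hGH : G ≤ H) :
    IsDominating H D := fun v hv =>
  let ⟨d, hd, hdv⟩ := hD v hv
  ⟨d, hd, hGH hdv⟩

lemma IsDominating.hasRvxColoring {D : Finset V} (hD : IsDominating G D)
    (hconn : (G.induce (D : Set V)).Connected) : hasRvxColoring G k D.card := by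
  classical
  refine ⟨D.toList.idxOf, fun S _ => ⟨(⊤ : G.Subgraph).induce (D ∪ S),
    SimpleGraph.connected_induce_iff.1 (hD.connected_induce_union hconn S),
    Set.subset_union_right, ?_, ?_⟩⟩
  · rintro u ⟨hu, huS⟩ v - huv
    exact (List.idxOf_inj (Finset.mem_toList.2 (hu.resolve_right huS))).1 huv
  · rintro v ⟨hv, hvS⟩
    rw [← D.length_toList]
    exact List.idxOf_lt_length_of_mem (Finset.mem_toList.2 (hv.resolve_right hvS))

lemma IsDominating.rvx_le_card {D : Finset V} (hD : IsDominating G D)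
    (hconn : (G.induce (D : Set V)).Connected) : rvx G k ≤ D.card :=
  Nat.sInf_le (hD.hasRvxColoring hconn)

lemma hasRvxColoring_rvx [Finite V] (hG : G.Connected) : hasRvxColoring G k (rvx G k) := by
  have := Fintype.ofFinite V
  refine Nat.sInf_mem (s := {m | hasRvxColoring G k m}) ⟨(Finset.univ : Finset V).card, ?_⟩
  have hdom : IsDominating G (Finset.univ : Finset V) := fun v hv =>
    absurd (Finset.mem_coe.2 (Finset.mem_univ v)) hv
  refine hdom.hasRvxColoring ?_
  rw [Finset.coe_univ]
  exact (SimpleGraph.induceUnivIso G).connected_iff.2 hG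

lemma rvx_le_one
    (h : ∀ S : Finset V, S.card = k → ∃ w, (G.induce (insert w (S : Set V))).Connected) :
    rvx G k ≤ 1 := by
  refine Nat.sInf_le ⟨fun _ => 0, fun S hS => ?_⟩
  obtain ⟨w, hw⟩ := h S hS
  refine ⟨(⊤ : G.Subgraph).induce (insert w S), SimpleGraph.connected_induce_iff.1 hw,
    Set.subset_insert w S, ?_, fun _ _ => Nat.one_pos⟩
  rintro u ⟨hu, huS⟩ v ⟨hv, hvS⟩ -
  exact (hu.resolve_right huS).trans (hv.resolve_right hvS).symm

lemma isDominating_of_subsingleton_neighborSet (hG : G.Preconnected) {D : Set V}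
    (hD : D.Nonempty) (hleaf : ∀ v ∉ D, (G.neighborSet v).Subsingleton) : IsDominating G D := by
  obtain ⟨w, hw⟩ := hD
  intro x hx
  obtain ⟨P, hP⟩ := hG.exists_isPath x w
  cases P with
  | nil => exact absurd hw hx
  | @cons _ y _ hxy Q =>
    refine ⟨y, ?_, hxy.symm⟩
    by_contra hy
    -- A path leaving the leaf `y` would have to return to `x`.
    cases Q with
    | nil => exact hy hw
    | @cons _ z _ hyz R =>
      obtain rfl : x = z := hleaf y hy hxy.symm hyz
      simp at hP

lemma rvx_add_two_le_card [Fintype V] (hG : G.Connected) (hV : 3 ≤ Fintype.card V) :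
    rvx G k + 2 ≤ Fintype.card V := by
  classical
  have : Nontrivial V := Fintype.one_lt_card_iff_nontrivial.1 (by lia)
  obtain ⟨T, hTG, hT⟩ := hG.exists_isTree_le
  obtain ⟨u, v, huv, hdu, hdv⟩ := hT.exists_ne_and_degree_eq_one
  have leaf {x : V} (hx : T.degree x = 1) : (T.neighborSet x).Subsingleton := fun _ ha _ hb =>
    (SimpleGraph.degree_eq_one_iff_existsUnique_adj.1 hx).unique ha hb
  have hcard : ({u, v}ᶜ : Finset V).card + 2 = Fintype.card V := by
    rw [← Finset.card_pair huv, add_comm, Finset.card_add_card_compl]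
  have hne : ({u, v}ᶜ : Finset V).Nonempty := Finset.card_pos.1 (by lia)
  have hleaf (x : V) (hx : x ∉ (({u, v}ᶜ : Finset V) : Set V)) :
      (T.neighborSet x).Subsingleton := by
    obtain rfl | rfl : x = u ∨ x = v := by simpa [or_iff_not_imp_right] using hx
    · exact leaf hdu
    · exact leaf hdv
  have hT := hT.connected.preconnected
  have hdom := isDominating_of_subsingleton_neighborSet hT (Finset.coe_nonempty.2 hne) hleaf
  have hpre := (hT.induce_of_degree_eq_one hleaf).mono (SimpleGraph.comap_monotone _ hTG)
  rw [← hcard]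
  gcongr
  exact (hdom.mono hTG).rvx_le_card ((SimpleGraph.connected_iff _).2 ⟨hpre, hne.coe_sort⟩)

end Domination

section Positivity

variable {V : Type*} {G : SimpleGraph V} {k : ℕ}

lemma connected_induce_of_rvx_eq_zero [Finite V] (hG : G.Connected) (h : rvx G k = 0)
    {S : Finset V} (hS : S.card = k) : (G.induce (S : Set V)).Connected := by
  obtain ⟨c, hc⟩ := hasRvxColoring_rvx (k := k) hG
  obtain ⟨T, hT, hST, -, hlt⟩ := hc S hS
  have hTS : T.verts ⊆ S := by
    intro v hv
    by_contra hvS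
    exact absurd (hlt v ⟨hv, hvS⟩) (by simp [h])
  rw [hST.antisymm hTS]
  exact hT.induce_verts

lemma rvx_pos_of_le_degree_compl [Fintype V] [DecidableRel Gᶜ.Adj] (hG : G.Connected)
    (hk : k ≠ 0) {v : V} (hv : k ≤ Gᶜ.degree v) : 0 < rvx G (k + 1) := by
  classical
  rw [Nat.pos_iff_ne_zero]
  intro h0
  obtain ⟨A, hA, hAk⟩ := Finset.exists_subset_card_eq hv
  have hGcA (a : V) (ha : a ∈ A) : Gᶜ.Adj v a := (Gᶜ.mem_neighborFinset v a).1 (hA ha)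
  have hvA : v ∉ A := fun hvA => (hGcA v hvA).ne rfl
  obtain ⟨a, ha⟩ : A.Nonempty := Finset.card_pos.1 (by lia)
  have hconn := connected_induce_of_rvx_eq_zero hG h0 (S := insert v A)
    (by rw [Finset.card_insert_of_notMem hvA, hAk])
  have hv_mem : v ∈ insert v A := Finset.mem_insert_self v A
  have ha_mem : a ∈ insert v A := Finset.mem_insert_of_mem ha
  have : Nontrivial ((insert v A : Finset V) : Set V) :=
    ⟨⟨v, hv_mem⟩, ⟨a, ha_mem⟩, fun h => (hGcA a ha).ne (congrArg Subtype.val h)⟩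
  obtain ⟨⟨b, hb⟩, hvb⟩ := hconn.preconnected.exists_adj_of_nontrivial ⟨v, hv_mem⟩
  have hvb : G.Adj v b := hvb
  have hbA : b ∈ A := (Finset.mem_insert.1 hb).resolve_left hvb.ne'
  exact (hGcA b hbA).2 hvb

lemma exists_two_le_degree [Fintype V] [DecidableRel G.Adj] (hG : G.Connected)
    (hV : 3 ≤ Fintype.card V) : ∃ v, 2 ≤ G.degree v := by
  by_contra! hdeg
  have hsum : 2 * G.edgeFinset.card ≤ Fintype.card V := by
    rw [← G.sum_degrees_eq_twice_card_edges, Fintype.card_eq_sum_ones]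
    exact Finset.sum_le_sum fun v _ => Nat.le_of_lt_succ (hdeg v)
  have hedges := hG.card_vert_le_card_edgeSet_add_one
  rw [Nat.card_eq_fintype_card, Nat.card_eq_fintype_card, ← SimpleGraph.edgeFinset_card] at hedges
  lia

lemma rvx_three_pos [Fintype V] (hV : 3 ≤ Fintype.card V) (hG : G.Connected)
    (hGc : Gᶜ.Connected) : 0 < rvx G 3 := by
  classical
  obtain ⟨v, hv⟩ := exists_two_le_degree hGc hV
  exact rvx_pos_of_le_degree_compl hG two_ne_zero hv

end Positivity

section DominatingClique

variable {V : Type*} {G : SimpleGraph V} {k : ℕ}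

lemma exists_isClique_isDominating {S : Set V} (hS : S.Nonempty)
    (hins : ∀ w, ¬ (Gᶜ.induce (insert w S)).Connected) :
    ∃ K ⊆ S, K.Nonempty ∧ G.IsClique K ∧ IsDominating G K := by
  -- `K` picks one vertex in each component of `Gᶜ[S]`.
  let r (C : (Gᶜ.induce S).ConnectedComponent) : S := Quot.out C
  have hr (C) : (Gᶜ.induce S).connectedComponentMk (r C) = C := Quot.out_eq C
  refine ⟨Set.range fun C => (r C : V), ?_, ?_, ?_, fun w hw => ?_⟩
  · rintro - ⟨C, rfl⟩
    exact (r C).2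
  · exact ⟨_, (Gᶜ.induce S).connectedComponentMk ⟨_, hS.some_mem⟩, rfl⟩
  · rintro - ⟨C, rfl⟩ - ⟨C', rfl⟩ hne
    by_contra hadj
    have hGc : (Gᶜ.induce S).Adj (r C) (r C') := ⟨hne, hadj⟩
    refine hne (congrArg (fun C => (r C : V)) ?_)
    rw [← hr C, ← hr C']
    exact SimpleGraph.ConnectedComponent.sound hGc.reachable
  · by_contra! hnadj
    refine hins w ((SimpleGraph.connected_iff_exists_forall_reachable _).2 ⟨⟨w, .inl rfl⟩, ?_⟩)
    have reach_of_mem (s : V) (hs : s ∈ S) :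
        (Gᶜ.induce (insert w S)).Reachable ⟨w, .inl rfl⟩ ⟨s, .inr hs⟩ := by
      let C := (Gᶜ.induce S).connectedComponentMk ⟨s, hs⟩
      have hwr : (Gᶜ.induce (insert w S)).Adj ⟨w, .inl rfl⟩ ⟨r C, .inr (r C).2⟩ :=
        SimpleGraph.Adj.symm ⟨fun h => hw ⟨C, h⟩, hnadj _ ⟨C, rfl⟩⟩
      have hrs : (Gᶜ.induce S).Reachable (r C) ⟨s, hs⟩ :=
        SimpleGraph.ConnectedComponent.exact (hr C)
      exact hwr.reachable.trans
        (hrs.map (SimpleGraph.induceHomOfLE Gᶜ (Set.subset_insert w S)).toHom)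
    rintro ⟨s, rfl | hs⟩
    · rfl
    · exact reach_of_mem s hs

lemma exists_dominating_clique_of_two_le_rvx_compl (hk : k ≠ 0) (h : 2 ≤ rvx Gᶜ k) :
    ∃ K : Finset V, K.card ≤ k ∧ K.Nonempty ∧ G.IsClique K ∧ IsDominating G K := by
  obtain ⟨S, hSk, hS⟩ : ∃ S : Finset V, S.card = k ∧
      ∀ w, ¬ (Gᶜ.induce (insert w (S : Set V))).Connected := by
    contrapose! h
    exact Nat.lt_succ_of_le (rvx_le_one h)
  have hne : S.Nonempty := Finset.card_pos.1 (by lia)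
  obtain ⟨K, hKS, hK⟩ := exists_isClique_isDominating (Finset.coe_nonempty.2 hne) hS
  lift K to Finset V using S.finite_toSet.subset hKS
  exact ⟨K, hSk ▸ Finset.card_le_card (Finset.coe_subset.1 hKS), Finset.coe_nonempty.1 hK.1, hK.2⟩

lemma rvx_le_card_of_dominating_clique {K : Finset V} (hne : K.Nonempty) (hK : G.IsClique K)
    (hdom : IsDominating G K) : rvx G k ≤ K.card := by
  have := hne.coe_sort
  exact hdom.rvx_le_card (SimpleGraph.induce_eq_top.2 hK ▸ SimpleGraph.connected_top)

end DominatingClique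

/-- `K` is a clique of `G` in which every vertex `x` has the private neighbour `p x`, adjacent to no
other vertex of `K`; the values of `p` outside `K` are irrelevant. For `|K| = 3` this is a triangle
with three pendant edges. It is the shape forced by a dominating clique that cannot be shrunk. -/
structure IsIrredundantClique {V : Type*} (G : SimpleGraph V) (K : Finset V) (p : V → V) :
    Prop where
  isClique : G.IsClique K
  adj_iff : ∀ ⦃x⦄, x ∈ K → ∀ ⦃y⦄, y ∈ K → (G.Adj x (p y) ↔ x = y)

namespace IsIrredundantClique

variable {V : Type*} {G : SimpleGraph V} {K L : Finset V} {p q : V → V}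

lemma injOn (h : IsIrredundantClique G K p) : Set.InjOn p K := by
  intro x hx y hy hxy
  exact (h.adj_iff hx hy).1 (hxy ▸ (h.adj_iff hx hx).2 rfl)

lemma apply_notMem (h : IsIrredundantClique G K p) (hK : 3 ≤ K.card) {y : V} (hy : y ∈ K) :
    p y ∉ K := by
  intro hpy
  classical
  obtain ⟨z, hz, hzyp⟩ := Finset.exists_mem_notMem_of_card_lt_card
    (Finset.card_le_two.trans_lt hK : ({y, p y} : Finset V).card < K.card)
  simp only [Finset.mem_insert, Finset.mem_singleton, not_or] at hzyp
  exact hzyp.1 ((h.adj_iff hz hy).1 (h.isClique hz hpy hzyp.2))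

lemma disjoint_image [DecidableEq V] (h : IsIrredundantClique G K p) (hK : 3 ≤ K.card) :
    Disjoint K (K.image p) := by
  rw [Finset.disjoint_right, Finset.forall_mem_image]
  exact fun y hy => h.apply_notMem hK hy

lemma two_mul_card_le [Fintype V] (h : IsIrredundantClique G K p) (hK : 3 ≤ K.card) :
    2 * K.card ≤ Fintype.card V := by
  classical
  calc 2 * K.card = (K ∪ K.image p).card := by
        rw [Finset.card_union_of_disjoint (h.disjoint_image hK), Finset.card_image_of_injOn h.injOn,
          two_mul]
    _ ≤ Fintype.card V := Finset.card_le_univ _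

lemma union_image_eq_univ [Fintype V] [DecidableEq V] (h : IsIrredundantClique G K p)
    (hK : 3 ≤ K.card) (hV : Fintype.card V = 2 * K.card) : K ∪ K.image p = Finset.univ := by
  refine Finset.eq_univ_of_card _ ?_
  rw [Finset.card_union_of_disjoint (h.disjoint_image hK), Finset.card_image_of_injOn h.injOn,
    hV, two_mul]

lemma degree_eq_card [Fintype V] [DecidableRel G.Adj] (h : IsIrredundantClique G K p)
    (hK : 3 ≤ K.card) (hV : Fintype.card V = 2 * K.card) {x : V} (hx : x ∈ K) :
    G.degree x = K.card := by
  classical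
  have hnbr : G.neighborFinset x = insert (p x) (K.erase x) := by
    ext y
    rw [SimpleGraph.mem_neighborFinset, Finset.mem_insert, Finset.mem_erase]
    refine ⟨fun hxy => ?_, ?_⟩
    · have hy : y ∈ K ∪ K.image p := h.union_image_eq_univ hK hV ▸ Finset.mem_univ y
      rcases Finset.mem_union.1 hy with hyK | hyp
      · exact .inr ⟨hxy.ne', hyK⟩
      · obtain ⟨z, hz, rfl⟩ := Finset.mem_image.1 hyp
        rw [(h.adj_iff hx hz).1 hxy]
        exact .inl rfl
    · rintro (rfl | ⟨hyx, hy⟩)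
      · exact (h.adj_iff hx hx).2 rfl
      · exact h.isClique hx hy hyx.symm
  have hpx : p x ∉ K.erase x := fun hpx => h.apply_notMem hK hx (Finset.mem_of_mem_erase hpx)
  rw [← G.card_neighborFinset_eq_degree, hnbr, Finset.card_insert_of_notMem hpx,
    Finset.card_erase_add_one hx]

lemma degree_apply_le_one [Fintype V] [DecidableEq V] [DecidableRel G.Adj]
    (h : IsIrredundantClique G K p) (hK : 3 ≤ K.card) (hV : Fintype.card V = 2 * K.card)
    (hp : Gᶜ.IsClique (K.image p : Set V)) {x : V} (hx : x ∈ K) : G.degree (p x) ≤ 1 := by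
  have hnbr : G.neighborFinset (p x) ⊆ {x} := by
    intro y hy
    rw [SimpleGraph.mem_neighborFinset] at hy
    have hyK : y ∈ K ∪ K.image p := h.union_image_eq_univ hK hV ▸ Finset.mem_univ y
    rcases Finset.mem_union.1 hyK with hyK | hyp
    · exact Finset.mem_singleton.2 ((h.adj_iff hyK hx).1 hy.symm)
    · exact absurd hy (hp (Finset.mem_image_of_mem p hx) hyp hy.ne).2
  exact Finset.card_le_card hnbr

/- The vertices of `L` have degree `|K|` in `Gᶜ`, hence `|K| - 1` in `G`, so none of them lies in
`K`. This forces `L` to consist of the private neighbours `p x`, which are then independent in `G`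
and have degree at most one there. -/
theorem card_ne_two_mul_of_compl [Fintype V] (h : IsIrredundantClique G K p)
    (h' : IsIrredundantClique Gᶜ L q) (hK : 3 ≤ K.card) (hLK : L.card = K.card) :
    Fintype.card V ≠ 2 * K.card := by
  classical
  intro hV
  have hdegL {x : V} (hx : x ∈ L) : Gᶜ.degree x = K.card :=
    (h'.degree_eq_card (hLK ▸ hK) (hLK ▸ hV) hx).trans hLK
  have hLp : L ⊆ K.image p := by
    intro x hxL
    have hx : x ∈ K ∪ K.image p := h.union_image_eq_univ hK hV ▸ Finset.mem_univ x
    refine (Finset.mem_union.1 hx).resolve_left fun hxK => ?_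
    have hdeg := hdegL hxL
    rw [G.degree_compl, h.degree_eq_card hK hV hxK] at hdeg
    lia
  have hL : L = K.image p :=
    Finset.eq_of_subset_of_card_le hLp (hLK ▸ Finset.card_image_le)
  obtain ⟨x, hx⟩ : K.Nonempty := Finset.card_pos.1 (by lia)
  have hle : G.degree (p x) ≤ 1 := h.degree_apply_le_one hK hV (hL ▸ h'.isClique) hx
  have hdeg := hdegL (hL ▸ Finset.mem_image_of_mem p hx)
  rw [G.degree_compl] at hdeg
  lia

end IsIrredundantClique

section UpperBound

variable {V : Type*} {G : SimpleGraph V} {k : ℕ}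

lemma exists_isIrredundantClique {K : Finset V} (hK : G.IsClique K) (hdom : IsDominating G K)
    (hcard : 2 ≤ K.card) (hmin : K.card ≤ rvx G k) : ∃ p, IsIrredundantClique G K p := by
  classical
  have hpriv (x : V) (hx : x ∈ K) : ∃ y, ∀ z ∈ K, G.Adj z y ↔ z = x := by
    have hlt : (K.erase x).card < K.card := Finset.card_erase_lt_of_mem hx
    have hne : (K.erase x).Nonempty := Finset.card_pos.1 (by rw [Finset.card_erase_of_mem hx]; lia)
    have hndom : ¬ IsDominating G (K.erase x : Finset V) := fun hdom' =>
      (hmin.trans (rvx_le_card_of_dominating_clique hne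
        (hK.subset (Finset.coe_subset.2 (K.erase_subset x))) hdom')).not_gt hlt
    simp only [IsDominating, not_forall, not_exists, not_and] at hndom
    obtain ⟨y, hy, hnadj⟩ := hndom
    have hadj {z : V} (hz : z ∈ K) (hzy : G.Adj z y) : z = x := by
      by_contra hzx
      exact hnadj z (Finset.mem_erase.2 ⟨hzx, hz⟩) hzy
    have hyK : y ∉ K := by
      intro hyK
      obtain rfl : y = x := by
        by_contra hyx
        exact hy (Finset.mem_erase.2 ⟨hyx, hyK⟩)
      obtain ⟨z, hz⟩ := hne
      exact hnadj z hz (hK (Finset.mem_of_mem_erase hz) hyK (Finset.ne_of_mem_erase hz))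
    obtain ⟨z, hz, hzy⟩ := hdom y hyK
    refine ⟨y, fun w hw => ⟨hadj hw, ?_⟩⟩
    rintro rfl
    exact hadj hz hzy ▸ hzy
  choose! p hp using hpriv
  exact ⟨p, hK, fun x hx y hy => hp y hy x hx⟩

lemma rvx_le_of_two_le_rvx_compl (hk : k ≠ 0) (h : 2 ≤ rvx Gᶜ k) : rvx G k ≤ k := by
  obtain ⟨K, hKk, hne, hK, hdom⟩ := exists_dominating_clique_of_two_le_rvx_compl hk h
  exact (rvx_le_card_of_dominating_clique hne hK hdom).trans hKk

lemma exists_isIrredundantClique_of_rvx_eq (hk : 2 ≤ k) (h : 2 ≤ rvx Gᶜ k) (hG : rvx G k = k) :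
    ∃ (K : Finset V) (p : V → V), K.card = k ∧ IsIrredundantClique G K p := by
  obtain ⟨K, hKk, hne, hK, hdom⟩ := exists_dominating_clique_of_two_le_rvx_compl (by lia) h
  have hkK : rvx G k ≤ K.card := rvx_le_card_of_dominating_clique hne hK hdom
  obtain ⟨p, hp⟩ := exists_isIrredundantClique hK hdom (by lia) (k := k) (by lia)
  exact ⟨K, p, by lia, hp⟩

lemma two_mul_le_card_of_rvx_eq [Fintype V] (hk : 3 ≤ k) (h : 2 ≤ rvx Gᶜ k) (hG : rvx G k = k) :
    2 * k ≤ Fintype.card V := by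
  obtain ⟨K, p, rfl, hp⟩ := exists_isIrredundantClique_of_rvx_eq (by lia) h hG
  exact hp.two_mul_card_le hk

lemma card_ne_two_mul_of_rvx_eq [Fintype V] (hk : 3 ≤ k) (hG : rvx G k = k) (hGc : rvx Gᶜ k = k) :
    Fintype.card V ≠ 2 * k := by
  obtain ⟨K, p, hKk, hp⟩ := exists_isIrredundantClique_of_rvx_eq (by lia) (by lia) hG
  obtain ⟨L, q, hLk, hq⟩ :=
    exists_isIrredundantClique_of_rvx_eq (by lia) (by rw [compl_compl]; lia) hGc
  exact hKk ▸ hp.card_ne_two_mul_of_compl hq (by lia) (by lia)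

theorem rvx_add_rvx_compl_lt_card [Fintype V] (hk : 3 ≤ k) (hV : 2 * k ≤ Fintype.card V + 1)
    (hG : G.Connected) (hGc : Gᶜ.Connected) : rvx G k + rvx Gᶜ k < Fintype.card V := by
  have hub : rvx G k + 2 ≤ Fintype.card V := rvx_add_two_le_card hG (by lia)
  have hubc : rvx Gᶜ k + 2 ≤ Fintype.card V := rvx_add_two_le_card hGc (by lia)
  rcases Nat.lt_or_ge (rvx G k) 2 with h1 | h2
  · lia
  rcases Nat.lt_or_ge (rvx Gᶜ k) 2 with h1c | h2c
  · lia
  have h2cc : 2 ≤ rvx Gᶜᶜ k := by rwa [compl_compl]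
  have hle : rvx G k ≤ k := rvx_le_of_two_le_rvx_compl (by lia) h2c
  have hlec : rvx Gᶜ k ≤ k := rvx_le_of_two_le_rvx_compl (by lia) h2cc
  have hcard := two_mul_le_card_of_rvx_eq hk h2c
  have hcardc := two_mul_le_card_of_rvx_eq hk h2cc
  have hne := card_ne_two_mul_of_rvx_eq (G := G) hk
  lia

end UpperBound

lemma connected_of_forall_adj_or_exists_adj_adj {V : Type*} [Nonempty V] {G : SimpleGraph V}
    (h : ∀ u v, u ≠ v → G.Adj u v ∨ ∃ w, G.Adj u w ∧ G.Adj w v) : G.Connected := by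
  refine (SimpleGraph.connected_iff _).2 ⟨fun u v => ?_, ‹_›⟩
  rcases eq_or_ne u v with rfl | huv
  · rfl
  · obtain huv | ⟨w, huw, hwv⟩ := h u v huv
    · exact huv.reachable
    · exact huw.reachable.trans hwv.reachable

section BlowUp

variable {V W : Type*} {G : SimpleGraph V} {H : SimpleGraph W} {f : V → W} {k : ℕ}

lemma isClique_image (hGH : ∀ ⦃x y⦄, G.Adj x y → f x ≠ f y → H.Adj (f x) (f y)) {K : Set V}
    (hK : G.IsClique K) : H.IsClique (f '' K) := by
  rintro - ⟨x, hx, rfl⟩ - ⟨y, hy, rfl⟩ hxy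
  exact hGH (hK hx hy (ne_of_apply_ne f hxy)) hxy

lemma IsDominating.image (hf : f.Surjective)
    (hGH : ∀ ⦃x y⦄, G.Adj x y → f x ≠ f y → H.Adj (f x) (f y)) {D : Set V}
    (hD : IsDominating G D) : IsDominating H (f '' D) := by
  intro w hw
  obtain ⟨v, rfl⟩ := hf w
  obtain ⟨d, hd, hdv⟩ := hD v fun hv => hw ⟨v, hv, rfl⟩
  have hfd : f d ∈ f '' D := ⟨d, hd, rfl⟩
  exact ⟨f d, hfd, hGH hdv fun h => hw (h ▸ hfd)⟩

lemma rvx_compl_le_one_of_surjective (hf : f.Surjective)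
    (hGH : ∀ ⦃x y⦄, G.Adj x y → f x ≠ f y → H.Adj (f x) (f y))
    (hH : ∀ K : Finset W, H.IsClique K → ¬ IsDominating H K) (hk : k ≠ 0) : rvx Gᶜ k ≤ 1 := by
  classical
  by_contra! h
  obtain ⟨K, -, -, hK, hdom⟩ := exists_dominating_clique_of_two_le_rvx_compl hk h
  have hclique := isClique_image hGH hK
  have hdom := hdom.image hf hGH
  rw [← Finset.coe_image] at hclique hdom
  exact hH (K.image f) hclique hdom

lemma not_isDominating_of_isClique_cycleGraph_five (K : Finset (Fin 5))
    (hK : (SimpleGraph.cycleGraph 5).IsClique K) :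
    ¬ IsDominating (SimpleGraph.cycleGraph 5) (K : Set (Fin 5)) := by
  simp only [IsDominating, Finset.mem_coe]
  revert K
  decide

lemma not_isDominating_of_isClique_compl_cycleGraph_five (K : Finset (Fin 5))
    (hK : (SimpleGraph.cycleGraph 5)ᶜ.IsClique K) :
    ¬ IsDominating (SimpleGraph.cycleGraph 5)ᶜ (K : Set (Fin 5)) := by
  simp only [IsDominating, Finset.mem_coe]
  revert K
  decide

variable {g : V → Fin 5}

lemma connected_comap_cycleGraph_five (hg : g.Surjective) :
    ((SimpleGraph.cycleGraph 5).comap g).Connected := by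
  have : Nonempty V := ⟨(hg 0).choose⟩
  refine connected_of_forall_adj_or_exists_adj_adj fun u v _ => ?_
  have hcycle : ∀ a b : Fin 5, (SimpleGraph.cycleGraph 5).Adj a b ∨
      ∃ c, (SimpleGraph.cycleGraph 5).Adj a c ∧ (SimpleGraph.cycleGraph 5).Adj c b := by decide
  refine (hcycle (g u) (g v)).imp_right ?_
  rintro ⟨c, hc⟩
  obtain ⟨w, rfl⟩ := hg c
  exact ⟨w, hc⟩

lemma connected_compl_comap_cycleGraph_five (hg : g.Surjective) :
    ((SimpleGraph.cycleGraph 5).comap g)ᶜ.Connected := by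
  have : Nonempty V := ⟨(hg 0).choose⟩
  refine connected_of_forall_adj_or_exists_adj_adj fun u v huv => ?_
  have hcycle : ∀ a b : Fin 5, ¬ (SimpleGraph.cycleGraph 5).Adj a b ∨
      ∃ c, (SimpleGraph.cycleGraph 5)ᶜ.Adj a c ∧ (SimpleGraph.cycleGraph 5)ᶜ.Adj c b := by decide
  refine (hcycle (g u) (g v)).imp (fun h => ⟨huv, h⟩) ?_
  rintro ⟨c, hac, hcb⟩
  obtain ⟨w, rfl⟩ := hg c
  exact ⟨w, ⟨ne_of_apply_ne g hac.ne, hac.2⟩, ⟨ne_of_apply_ne g hcb.ne, hcb.2⟩⟩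

theorem rvx_three_add_rvx_three_compl_comap_cycleGraph_five [Finite V] (hg : g.Surjective) :
    rvx ((SimpleGraph.cycleGraph 5).comap g) 3 +
      rvx ((SimpleGraph.cycleGraph 5).comap g)ᶜ 3 = 2 := by
  have := Fintype.ofFinite V
  set G := (SimpleGraph.cycleGraph 5).comap g
  have hV : 3 ≤ Fintype.card V := le_trans (by simp) (Fintype.card_le_of_surjective g hg)
  have hG : G.Connected := connected_comap_cycleGraph_five hg
  have hGc : Gᶜ.Connected := connected_compl_comap_cycleGraph_five hg
  have hpos : 0 < rvx G 3 := rvx_three_pos hV hG hGc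
  have hposc : 0 < rvx Gᶜ 3 := rvx_three_pos hV hGc (by rwa [compl_compl])
  have hle : rvx Gᶜᶜ 3 ≤ 1 := rvx_compl_le_one_of_surjective hg
    (H := (SimpleGraph.cycleGraph 5)ᶜ) (fun _ _ h hne => ⟨hne, h.2⟩)
    not_isDominating_of_isClique_compl_cycleGraph_five three_ne_zero
  have hlec : rvx Gᶜ 3 ≤ 1 := rvx_compl_le_one_of_surjective hg (fun _ _ h _ => h)
    not_isDominating_of_isClique_cycleGraph_five three_ne_zero
  rw [compl_compl] at hle
  lia

end BlowUp

section Path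

variable {m k : ℕ}

lemma verts_eq_univ_of_zero_mem_of_last_mem {T : (SimpleGraph.pathGraph (m + 1)).Subgraph}
    (hT : T.Connected) (h0 : 0 ∈ T.verts) (hlast : Fin.last m ∈ T.verts) :
    T.verts = Set.univ := by
  refine Set.eq_univ_of_forall fun v => ?_
  by_contra hv
  -- An edge of `T` would have to jump over the missing vertex `v`.
  obtain ⟨P⟩ := hT.preconnected ⟨0, h0⟩ ⟨Fin.last m, hlast⟩
  obtain ⟨d, -, hd, hd'⟩ := P.exists_boundary_dart {t | t.1 < v}
    (lt_of_le_of_ne v.zero_le (ne_of_mem_of_not_mem h0 hv)) v.le_last.not_gt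
  have hbefore : d.fst.1.1 < v.1 := hd
  have hafter : v.1 ≤ d.snd.1.1 := not_lt.1 hd'
  have hne : d.snd.1.1 ≠ v.1 := Fin.val_ne_of_ne (ne_of_mem_of_not_mem d.snd.2 hv)
  have hadj := SimpleGraph.pathGraph_adj.1 d.adj.adj_sub
  lia

lemma le_rvx_pathGraph (hk : 2 ≤ k) (hkm : k ≤ m) :
    m ≤ rvx (SimpleGraph.pathGraph (m + 2)) k := by
  obtain ⟨c, hc⟩ := hasRvxColoring_rvx (k := k) (SimpleGraph.pathGraph_connected (m + 1))
  let ends : Finset (Fin (m + 2)) := {0, Fin.last (m + 1)}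
  have hends : ends.card = 2 := Finset.card_pair Fin.last_pos.ne
  have hrainbow (u) (hu : u ∈ endsᶜ) (v) (hv : v ∈ endsᶜ) :
      (c u = c v → u = v) ∧ c u < rvx (SimpleGraph.pathGraph (m + 2)) k := by
    have hsub : ends ⊆ {u, v}ᶜ := Finset.subset_compl_comm.1
      (Finset.insert_subset hu (Finset.singleton_subset_iff.2 hv))
    have hcard : k ≤ ({u, v}ᶜ : Finset (Fin (m + 2))).card := by
      have := Finset.card_le_two (a := u) (b := v)
      rw [Finset.card_compl, Fintype.card_fin]
      lia
    obtain ⟨S, hSe, hSuv, hSk⟩ := Finset.exists_subsuperset_card_eq hsub (by lia) hcard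
    obtain ⟨T, hT, hST, hinj, hlt⟩ := hc S hSk
    have hTuniv : T.verts = Set.univ := verts_eq_univ_of_zero_mem_of_last_mem hT
      (hST (hSe (by simp [ends]))) (hST (hSe (by simp [ends])))
    rw [hTuniv] at hinj hlt
    have huvS := Finset.insert_subset_iff.1 (Finset.subset_compl_comm.1 hSuv)
    have huS : u ∈ Set.univ \ (S : Set _) := ⟨trivial, Finset.mem_compl.1 huvS.1⟩
    have hvS : v ∈ Set.univ \ (S : Set _) :=
      ⟨trivial, Finset.mem_compl.1 (Finset.singleton_subset_iff.1 huvS.2)⟩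
    exact ⟨fun h => hinj huS hvS h, hlt u huS⟩
  calc m = endsᶜ.card := by rw [Finset.card_compl, hends, Fintype.card_fin, Nat.add_sub_cancel]
    _ ≤ (Finset.range (rvx (SimpleGraph.pathGraph (m + 2)) k)).card :=
      Finset.card_le_card_of_injOn c
        (fun u hu => Finset.mem_coe.2 (Finset.mem_range.2 (hrainbow u hu u hu).2))
        fun u hu v hv => (hrainbow u hu v hv).1
    _ = rvx (SimpleGraph.pathGraph (m + 2)) k := Finset.card_range _

lemma connected_compl_pathGraph (hm : 5 ≤ m) : (SimpleGraph.pathGraph m)ᶜ.Connected := by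
  have : Nonempty (Fin m) := ⟨0, by lia⟩
  refine connected_of_forall_adj_or_exists_adj_adj fun u v huv => ?_
  refine or_iff_not_imp_left.2 fun hadj => ?_
  simp only [SimpleGraph.compl_adj, SimpleGraph.pathGraph_adj, ne_eq, Fin.ext_iff] at *
  by_cases h : 2 ≤ u.1 ∧ 2 ≤ v.1
  · exact ⟨⟨0, by lia⟩, by grind⟩
  · exact ⟨⟨4, by lia⟩, by grind⟩

theorem rvx_three_add_rvx_three_compl_pathGraph (hm : 5 ≤ m) :
    rvx (SimpleGraph.pathGraph m) 3 + rvx (SimpleGraph.pathGraph m)ᶜ 3 = m - 1 := by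
  obtain ⟨l, rfl⟩ := Nat.exists_eq_add_of_le' (show 2 ≤ m by lia)
  have hG := SimpleGraph.pathGraph_connected (l + 1)
  have hGc := connected_compl_pathGraph hm
  have hlow : l ≤ rvx (SimpleGraph.pathGraph (l + 2)) 3 :=
    le_rvx_pathGraph (by lia) (by lia)
  have hpos : 0 < rvx (SimpleGraph.pathGraph (l + 2))ᶜ 3 :=
    rvx_three_pos (by simp; lia) hGc (by rwa [compl_compl])
  have hlt := rvx_add_rvx_compl_lt_card (k := 3) le_rfl (by simp; lia) hG hGc
  rw [Fintype.card_fin] at hlt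
  lia

end Path

/-- for connected complementary graphs of order `n ≥ 5`,
`2 ≤ rvx_3(G) + rvx_3(Ḡ) ≤ n - 1`, and both bounds are sharp. -/
theorem rvx_three_nordhaus_gaddum (n : ℕ) (hn : 5 ≤ n) :
    (∀ (V : Type) [Fintype V] (G : SimpleGraph V), Fintype.card V = n →
      G.Connected → Gᶜ.Connected →
        2 ≤ rvx G 3 + rvx Gᶜ 3 ∧ rvx G 3 + rvx Gᶜ 3 ≤ n - 1) ∧
    (∃ G : SimpleGraph (Fin n), G.Connected ∧ Gᶜ.Connected ∧ rvx G 3 + rvx Gᶜ 3 = 2) ∧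
    (∃ G : SimpleGraph (Fin n), G.Connected ∧ Gᶜ.Connected ∧
      rvx G 3 + rvx Gᶜ 3 = n - 1) := by
  refine ⟨fun V _ G hV hG hGc => ?_, ?_, ?_⟩
  · have hpos : 0 < rvx G 3 := rvx_three_pos (by lia) hG hGc
    have hposc : 0 < rvx Gᶜ 3 := rvx_three_pos (by lia) hGc (by rwa [compl_compl])
    have hlt := rvx_add_rvx_compl_lt_card (k := 3) le_rfl (by lia) hG hGc
    lia
  · have hsurj : (Function.invFun (Fin.castLE hn)).Surjective :=
      Function.invFun_surjective (Fin.castLE_injective hn)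
    exact ⟨_, connected_comap_cycleGraph_five hsurj, connected_compl_comap_cycleGraph_five hsurj,
      rvx_three_add_rvx_three_compl_comap_cycleGraph_five hsurj⟩
  · obtain ⟨m, rfl⟩ := Nat.exists_eq_add_of_le' (show 1 ≤ n by lia)
    exact ⟨_, SimpleGraph.pathGraph_connected m, connected_compl_pathGraph hn,
      rvx_three_add_rvx_three_compl_pathGraph hn⟩
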